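/- Fix s ∈ ℕ and let 𝒯_s(φ) := Σ_{d ∈ ℕ^{n+1}_s} φ_{2d}. If for each r ≥ max(s, max_j d_j), φ^r is an optimal solution of the problem inf { 𝒯_s(φ) : φ feasible at order r }, then lim_{r→∞} 𝒯_s(φ^r) = Σ_{d ∈ ℕ^{n+1}_s} μ_{2d}, and lim_{r→∞} φ^r_d = μ_d for every d ∈ ℕ^{n+1}_{2s}. -/

import Mathlib

open MeasureTheory Set

noncomputable section

/-- The finite set `ℕ^{n+1}_r` of multi-indices `d ∈ ℕ^n × ℕ` with `|d| ≤ r`. -/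
def idx (n r : ℕ) : Finset ((Fin n → ℕ) × ℕ) :=
  Finset.filter (fun d => (∑ i, d.1 i) + d.2 ≤ r)
    ((Fintype.piFinset fun _ : Fin n => Finset.range (r + 1)) ×ˢ Finset.range (r + 1))

/-- Multi-indices `e ∈ ℕ^n` with `|e| ≤ r`. -/
def xIdx (n r : ℕ) : Finset (Fin n → ℕ) :=
  Finset.filter (fun e => ∑ i, e i ≤ r) (Fintype.piFinset fun _ : Fin n => Finset.range (r + 1))

/-- Evaluation of a polynomial in `x` of degree `≤ r` given by its coefficients `c`. -/
def polyEval (n r : ℕ) (c : (Fin n → ℕ) → ℝ) (x : Fin n → ℝ) : ℝ :=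
  ∑ e ∈ xIdx n r, c e * ∏ i, x i ^ e i

/-- The moment matrix `M_r(φ)`, with rows and columns indexed by `ℕ^{n+1}_r`. -/
def momMat (n r : ℕ) (φ : ((Fin n → ℕ) × ℕ) → ℝ) : Matrix (idx n r) (idx n r) ℝ :=
  fun a b => φ (fun i => a.1.1 i + b.1.1 i, a.1.2 + b.1.2)

/-- The localizing matrix `M_{r−t}(g φ)` of a polynomial `g` in `x` with coefficients `c`
and degree `≤ 2t`. -/
def locMatX (n : ℕ) (c : (Fin n → ℕ) → ℝ) (t r : ℕ) (φ : ((Fin n → ℕ) × ℕ) → ℝ) :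
    Matrix (idx n (r - t)) (idx n (r - t)) ℝ :=
  fun a b => ∑ e ∈ xIdx n (2 * t),
    c e * φ (fun i => e i + a.1.1 i + b.1.1 i, a.1.2 + b.1.2)

/-- The localizing matrix `M_{r−1}(g_{m+1} φ)` of the polynomial `g_{m+1}(x,y) = y(γ−y)`. -/
def locMatY (n : ℕ) (γ : ℝ) (r : ℕ) (φ : ((Fin n → ℕ) × ℕ) → ℝ) :
    Matrix (idx n (r - 1)) (idx n (r - 1)) ℝ :=
  fun a b => γ * φ (fun i => a.1.1 i + b.1.1 i, a.1.2 + b.1.2 + 1)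
    - φ (fun i => a.1.1 i + b.1.1 i, a.1.2 + b.1.2 + 2)

/-- Feasibility of a pseudo-moment sequence `φ` at relaxation order `r`:
`M_r(φ) ⪰ 0`, `M_{r−d_j}(g_j φ) ⪰ 0` for `j = 1,…,m+1`, and `φ_d = μ_d` for all
`d ∈ D = {d : d_y ≤ 1}` with `|d| ≤ 2r`. -/
def Feasible (n m : ℕ) (γ : ℝ) (g : Fin m → (Fin n → ℕ) → ℝ) (t : Fin m → ℕ)
    (μmom : ((Fin n → ℕ) × ℕ) → ℝ) (r : ℕ) (φ : ((Fin n → ℕ) × ℕ) → ℝ) : Prop :=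
  (momMat n r φ).PosSemidef ∧
  (∀ j, (locMatX n (g j) (t j) r φ).PosSemidef) ∧
  (locMatY n γ r φ).PosSemidef ∧
  ∀ d : (Fin n → ℕ) × ℕ, d.2 ≤ 1 → (∑ i, d.1 i) + d.2 ≤ 2 * r → φ d = μmom d

section Abstract
open Filter Topology

variable {A : Type*} [CommRing A] [Algebra ℝ A]

theorem ab_bound (y : A) (γ : ℝ) (L : ℕ → A →ₗ[ℝ] ℝ)
    (hpos : ∀ h : A, ∀ᶠ r in atTop, 0 ≤ L r (h ^ 2))
    (hY : ∀ h : A, ∀ᶠ r in atTop, 0 ≤ γ * L r (y * h ^ 2) - L r (y ^ 2 * h ^ 2))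
    (k : ℕ) (h : A) : ∀ᶠ r in atTop, L r ((h * y ^ k) ^ 2) ≤ (γ ^ 2) ^ k * L r (h ^ 2) := by
  induction k generalizing h with
  | zero => simp
  | succ k ih =>
    filter_upwards [ih (h * y), hpos (γ • h - y * h), hY h] with r h1 h2 h3
    have e1 : (h * y ^ (k + 1)) ^ 2 = (h * y * y ^ k) ^ 2 := by ring
    have e2 : (γ • h - y * h) ^ 2
        = (γ ^ 2) • h ^ 2 - (2 * γ) • (y * h ^ 2) + y ^ 2 * h ^ 2 := by
      simp only [Algebra.smul_def, map_mul, map_pow, map_ofNat]; ring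
    have e3 : (h * y) ^ 2 = y ^ 2 * h ^ 2 := by ring
    rw [e2, map_add, map_sub, map_smul, map_smul, smul_eq_mul, smul_eq_mul] at h2
    rw [e1, pow_succ (γ ^ 2) k, mul_assoc ((γ ^ 2) ^ k)]
    refine h1.trans (mul_le_mul_of_nonneg_left ?_ (by positivity))
    rw [e3]; linarith

theorem ab_cs (L : ℕ → A →ₗ[ℝ] ℝ)
    (hpos : ∀ h : A, ∀ᶠ r in atTop, 0 ≤ L r (h ^ 2)) (u v : A) (δ : ℝ) :
    ∀ᶠ r in atTop, 2 * δ * |L r (u * v)| ≤ δ ^ 2 * L r (u ^ 2) + L r (v ^ 2) := by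
  filter_upwards [hpos (δ • u - v), hpos (δ • u + v)] with r h1 h2
  have e1 : (δ • u - v) ^ 2 = (δ ^ 2) • u ^ 2 - (2 * δ) • (u * v) + v ^ 2 := by
    simp only [Algebra.smul_def, map_mul, map_pow, map_ofNat]; ring
  have e2 : (δ • u + v) ^ 2 = (δ ^ 2) • u ^ 2 + (2 * δ) • (u * v) + v ^ 2 := by
    simp only [Algebra.smul_def, map_mul, map_pow, map_ofNat]; ring
  rw [e1, map_add, map_sub, map_smul, map_smul, smul_eq_mul, smul_eq_mul] at h1
  rw [e2, map_add, map_add, map_smul, map_smul, smul_eq_mul, smul_eq_mul] at h2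
  rcases abs_cases (L r (u * v)) with h | h <;> rw [h.1] <;> linarith

theorem ab_step (y : A) (γ : ℝ) (S : Subalgebra ℝ A) (L : ℕ → A →ₗ[ℝ] ℝ) (I : A →ₗ[ℝ] ℝ)
    (hpos : ∀ h : A, ∀ᶠ r in atTop, 0 ≤ L r (h ^ 2))
    (hY : ∀ h : A, ∀ᶠ r in atTop, 0 ≤ γ * L r (y * h ^ 2) - L r (y ^ 2 * h ^ 2))
    (hIpos : ∀ h : A, 0 ≤ I (h ^ 2))
    (hIY : ∀ h : A, 0 ≤ γ * I (y * h ^ 2) - I (y ^ 2 * h ^ 2))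
    (h0 : ∀ w ∈ S, ∀ᶠ r in atTop, L r w = I w)
    (h1 : ∀ w ∈ S, ∀ᶠ r in atTop, L r (y * w) = I (y * w))
    (happ : ∀ ε > 0, ∃ p ∈ S, I ((y - p) ^ 2) ≤ ε)
    (hy2 : Tendsto (fun r => L r (y ^ 2)) atTop (𝓝 (I (y ^ 2))))
    (k : ℕ) : ∀ w ∈ S, Tendsto (fun r => L r (w * y ^ k)) atTop (𝓝 (I (w * y ^ k))) := by
  induction k with
  | zero =>
    intro w hw
    simpa using tendsto_const_nhds.congr' ((h0 w hw).mono fun r h => h.symm)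
  | succ k ih =>
    intro w hw
    have hIb : I ((w * y ^ k) ^ 2) ≤ (γ ^ 2) ^ k * I (w ^ 2) := by
      obtain ⟨_, h⟩ := (ab_bound y γ (fun _ => I) (fun h => .of_forall fun _ => hIpos h)
        (fun h => .of_forall fun _ => hIY h) k w).exists
      exact h
    set K := (γ ^ 2) ^ k * I (w ^ 2) with hK
    have hK0 : 0 ≤ K := mul_nonneg (by positivity) (hIpos w)
    rw [Metric.tendsto_nhds]
    intro ε' hε'
    obtain ⟨ε, hε, rfl⟩ : ∃ ε > 0, ε' = 6 * ε := ⟨ε' / 6, by positivity, by ring⟩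
    set δ := ε / (K + 1) with hδ
    have hδ0 : 0 < δ := by positivity
    have hδK : δ * K ≤ ε := by
      rw [hδ, div_mul_eq_mul_div, div_le_iff₀ (by positivity)]; nlinarith
    obtain ⟨p, hp, hpI⟩ := happ (δ * ε) (by positivity)
    have hIcs : 2 * δ * |I ((w * y ^ k) * (y - p))|
        ≤ δ ^ 2 * I ((w * y ^ k) ^ 2) + I ((y - p) ^ 2) := by
      obtain ⟨_, h⟩ := (ab_cs (fun _ => I) (fun h => .of_forall fun _ => hIpos h)
        (w * y ^ k) (y - p) δ).exists
      exact h
    have key : ∀ a b c : ℝ, 2 * δ * a ≤ δ ^ 2 * b + c → b ≤ K → c ≤ 2 * (δ * ε) →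
        a ≤ 3 / 2 * ε := by
      intro a b c h1 h2 h3
      have : δ ^ 2 * b ≤ δ * ε := by
        calc δ ^ 2 * b ≤ δ ^ 2 * K := by gcongr
          _ = δ * (δ * K) := by ring
          _ ≤ δ * ε := by gcongr
      have h4 : δ * (2 * a) ≤ δ * (3 * ε) := by linarith
      have := le_of_mul_le_mul_left h4 hδ0
      linarith
    have hI2 := key _ _ _ hIcs hIb (by nlinarith [mul_pos hδ0 hε])
    have hw2 : w ^ 2 ∈ S := pow_mem hw 2
    have hv : Tendsto (fun r => L r ((y - p) ^ 2)) atTop (𝓝 (I ((y - p) ^ 2))) := by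
      have e (M : A →ₗ[ℝ] ℝ) : M ((y - p) ^ 2) = M (y ^ 2) - 2 * M (y * p) + M (p ^ 2) := by
        have : (y - p) ^ 2 = y ^ 2 - (2 : ℝ) • (y * p) + p ^ 2 := by
          simp only [Algebra.smul_def, map_ofNat]; ring
        rw [this, map_add, map_sub, map_smul, smul_eq_mul]
      rw [e]
      have := (hy2.sub_const (2 * I (y * p))).add_const (I (p ^ 2))
      refine this.congr' ?_
      filter_upwards [h1 p hp, h0 _ (pow_mem hp 2)] with r a b
      rw [e, a, b]
    have hv' := hv.eventually (gt_mem_nhds (show I ((y - p) ^ 2) < 2 * (δ * ε) by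
      nlinarith [mul_pos hδ0 hε]))
    have hih := (Metric.tendsto_nhds.1 (ih (w * p) (mul_mem hw hp))) ε hε
    filter_upwards [hv', hih, ab_cs L hpos (w * y ^ k) (y - p) δ, ab_bound y γ L hpos hY k w,
      h0 _ hw2] with r a1 a2 a3 a4 a5
    rw [a5] at a4
    have hL2 := key _ _ _ a3 a4 a1.le
    have e (M : A →ₗ[ℝ] ℝ) : M (w * y ^ (k + 1))
        = M ((w * y ^ k) * (y - p)) + M (w * p * y ^ k) := by
      rw [← map_add]; congr 1; ring
    rw [Real.dist_eq] at a2 ⊢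
    rw [e, e]
    have b1 := abs_le.1 hI2
    have b2 := abs_le.1 hL2
    have b3 := abs_lt.1 a2
    rw [abs_lt]
    constructor <;> linarith [b1.1, b1.2, b2.1, b2.2, b3.1, b3.2]

/-- auxiliary sums of squares -/
def sosU {R : Type*} [CommRing R] (y p : R) : ℕ → R
  | 0 => (y - p) ^ 2
  | k + 1 => p ^ 2 * sosU y p k + (y ^ k * (y ^ 2 - p ^ 2)) ^ 2

/-- auxiliary sums of squares -/
def sosT {R : Type*} [CommRing R] (y p : R) : ℕ → R
  | 0 => (y - p) ^ 2
  | k + 1 => p ^ 2 * sosT y p k + sosU y p (k + 1)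

theorem sosU_eq {R : Type*} [CommRing R] (y p : R) (k : ℕ) : sosU y p k
    = y ^ (2 * k + 2) - p ^ 2 * y ^ (2 * k) - 2 * y * p ^ (2 * k + 1) + 2 * p ^ (2 * k + 2) := by
  induction k with
  | zero => simp [sosU]; ring
  | succ k ih => rw [sosU, ih]; ring

theorem sosT_eq {R : Type*} [CommRing R] (y p : R) (k : ℕ) : sosT y p k
    = y ^ (2 * k + 2) - (2 * k + 2) * (y * p ^ (2 * k + 1))
      + (2 * k + 1) * p ^ (2 * k + 2) := by
  induction k with
  | zero => simp [sosT]; ring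
  | succ k ih => rw [sosT, ih, sosU_eq]; push_cast; ring

theorem sosU_map {R R' : Type*} [CommRing R] [CommRing R'] (F : R →+* R') (y p : R) (k : ℕ) :
    F (sosU y p k) = sosU (F y) (F p) k := by
  simp [sosU_eq, map_ofNat F 2]

theorem sosT_map {R R' : Type*} [CommRing R] [CommRing R'] (F : R →+* R') (y p : R) (k : ℕ) :
    F (sosT y p k) = sosT (F y) (F p) k := by
  simp [sosT_eq, map_ofNat F 2]

theorem sosU_pos (L : ℕ → A →ₗ[ℝ] ℝ)
    (hpos : ∀ h : A, ∀ᶠ r in atTop, 0 ≤ L r (h ^ 2)) (y p : A) (k : ℕ) (w : A) :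
    ∀ᶠ r in atTop, 0 ≤ L r (w ^ 2 * sosU y p k) := by
  induction k generalizing w with
  | zero => simpa [sosU, mul_pow] using hpos (w * (y - p))
  | succ k ih =>
    filter_upwards [ih (w * p), hpos (w * (y ^ k * (y ^ 2 - p ^ 2)))] with r h1 h2
    have : w ^ 2 * sosU y p (k + 1) = (w * p) ^ 2 * sosU y p k
        + (w * (y ^ k * (y ^ 2 - p ^ 2))) ^ 2 := by rw [sosU]; ring
    rw [this, map_add]; positivity

theorem sosT_pos (L : ℕ → A →ₗ[ℝ] ℝ)
    (hpos : ∀ h : A, ∀ᶠ r in atTop, 0 ≤ L r (h ^ 2)) (y p : A) (k : ℕ) (w : A) :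
    ∀ᶠ r in atTop, 0 ≤ L r (w ^ 2 * sosT y p k) := by
  induction k generalizing w with
  | zero => simpa [sosT, mul_pow] using hpos (w * (y - p))
  | succ k ih =>
    filter_upwards [ih (w * p), sosU_pos L hpos y p (k + 1) w] with r h1 h2
    have : w ^ 2 * sosT y p (k + 1) = (w * p) ^ 2 * sosT y p k
        + w ^ 2 * sosU y p (k + 1) := by rw [sosT]; ring
    rw [this, map_add]; positivity

theorem sosU_le (B : ℝ) (k : ℕ) : ∃ C, 0 ≤ C ∧ ∀ y p : ℝ, |y| ≤ B → |p| ≤ B →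
    sosU y p k ≤ C * (y - p) ^ 2 := by
  induction k with
  | zero => exact ⟨1, by norm_num, fun y p _ _ => by simp [sosU]⟩
  | succ k ih =>
    obtain ⟨C, hC, h⟩ := ih
    refine ⟨B ^ 2 * C + (B ^ k) ^ 2 * (2 * B) ^ 2, by positivity, fun y p hy hp => ?_⟩
    have hB : 0 ≤ B := (abs_nonneg y).trans hy
    have h1 : p ^ 2 ≤ B ^ 2 := by rw [← sq_abs]; gcongr
    have h2 : (y ^ k) ^ 2 ≤ (B ^ k) ^ 2 := by rw [← sq_abs, abs_pow]; gcongr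
    have h3 : (y + p) ^ 2 ≤ (2 * B) ^ 2 := by
      rw [← sq_abs]; gcongr; exact (abs_add_le y p).trans (by linarith)
    rw [sosU]
    calc _ ≤ p ^ 2 * (C * (y - p) ^ 2) + (y ^ k * (y ^ 2 - p ^ 2)) ^ 2 := by gcongr; exact h y p hy hp
      _ = p ^ 2 * (C * (y - p) ^ 2) + (y ^ k) ^ 2 * (y + p) ^ 2 * (y - p) ^ 2 := by ring
      _ ≤ B ^ 2 * (C * (y - p) ^ 2) + (B ^ k) ^ 2 * (2 * B) ^ 2 * (y - p) ^ 2 := by gcongr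
      _ = _ := by ring

theorem sosT_le (B : ℝ) (k : ℕ) : ∃ C, 0 ≤ C ∧ ∀ y p : ℝ, |y| ≤ B → |p| ≤ B →
    sosT y p k ≤ C * (y - p) ^ 2 := by
  induction k with
  | zero => exact ⟨1, by norm_num, fun y p _ _ => by simp [sosT]⟩
  | succ k ih =>
    obtain ⟨C, hC, h⟩ := ih
    obtain ⟨C', hC', h'⟩ := sosU_le B (k + 1)
    refine ⟨B ^ 2 * C + C', by positivity, fun y p hy hp => ?_⟩
    have hB : 0 ≤ B := (abs_nonneg y).trans hy
    have h1 : p ^ 2 ≤ B ^ 2 := by rw [← sq_abs]; gcongr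
    rw [sosT]
    calc _ ≤ p ^ 2 * (C * (y - p) ^ 2) + C' * (y - p) ^ 2 := by
          gcongr
          · exact h y p hy hp
          · exact h' y p hy hp
      _ ≤ B ^ 2 * (C * (y - p) ^ 2) + C' * (y - p) ^ 2 := by gcongr
      _ = _ := by ring

/-- Lower bound for even moments. -/
theorem ab_lower (y : A) (S : Subalgebra ℝ A) (L : ℕ → A →ₗ[ℝ] ℝ) (I : A →ₗ[ℝ] ℝ)
    (hpos : ∀ h : A, ∀ᶠ r in atTop, 0 ≤ L r (h ^ 2))
    (h0 : ∀ w ∈ S, ∀ᶠ r in atTop, L r w = I w)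
    (h1 : ∀ w ∈ S, ∀ᶠ r in atTop, L r (y * w) = I (y * w))
    (k : ℕ) (w : A) (hw : w ∈ S)
    (happ : ∀ k, ∀ ε > 0, ∃ p ∈ S, I (w ^ 2 * sosT y p k) ≤ ε) (ε : ℝ) (hε : 0 < ε) :
    ∀ᶠ r in atTop, I (w ^ 2 * y ^ (2 * k)) - ε ≤ L r (w ^ 2 * y ^ (2 * k)) := by
  have hw2 : w ^ 2 ∈ S := pow_mem hw 2
  cases k with
  | zero =>
    filter_upwards [h0 _ hw2] with r h
    simp [h]; linarith
  | succ k =>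
    obtain ⟨p, hp, hpI⟩ := happ k ε hε
    filter_upwards [sosT_pos L hpos y p k w, h0 _ (mul_mem hw2 (pow_mem hp (2 * k + 2))),
      h1 _ (mul_mem hw2 (pow_mem hp (2 * k + 1)))] with r a1 a2 a3
    have e (M : A →ₗ[ℝ] ℝ) : M (w ^ 2 * sosT y p k) = M (w ^ 2 * y ^ (2 * (k + 1)))
        - (2 * k + 2) * M (y * (w ^ 2 * p ^ (2 * k + 1)))
        + (2 * k + 1) * M (w ^ 2 * p ^ (2 * k + 2)) := by
      have e' : w ^ 2 * sosT y p k = w ^ 2 * y ^ (2 * (k + 1))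
          - (2 * k + 2 : ℝ) • (y * (w ^ 2 * p ^ (2 * k + 1)))
          + (2 * k + 1 : ℝ) • (w ^ 2 * p ^ (2 * k + 2)) := by
        rw [sosT_eq]
        simp only [Algebra.smul_def, map_add, map_mul, map_ofNat, map_natCast, map_one]
        ring
      rw [e', map_add, map_sub, map_smul, map_smul, smul_eq_mul, smul_eq_mul]
    rw [e] at hpI
    rw [e, a2, a3] at a1
    linarith

theorem sum_squeeze {ι : Type*} (s : Finset ι) (a : ℕ → ι → ℝ) (b : ι → ℝ)
    (hlow : ∀ i ∈ s, ∀ ε > 0, ∀ᶠ r in atTop, b i - ε ≤ a r i)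
    (hup : ∀ᶠ r in atTop, ∑ i ∈ s, a r i ≤ ∑ i ∈ s, b i) (i : ι) (hi : i ∈ s) :
    Tendsto (fun r => a r i) atTop (𝓝 (b i)) := by
  classical
  rw [Metric.tendsto_nhds]
  intro ε hε
  set η := ε / (2 * (s.card + 1)) with hη
  have hη0 : 0 < η := by positivity
  have hηs : η * (s.card + 1) = ε / 2 := by rw [hη]; field_simp
  have hall : ∀ᶠ r in atTop, ∀ j ∈ s, b j - η ≤ a r j :=
    (Filter.eventually_all_finset s).2 fun j hj => hlow j hj η hη0
  filter_upwards [hall, hup] with r h1 h2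
  rw [Real.dist_eq, abs_lt]
  have h3 : ∑ j ∈ s.erase i, (b j - η) ≤ ∑ j ∈ s.erase i, a r j :=
    Finset.sum_le_sum fun j hj => h1 j (Finset.mem_of_mem_erase hj)
  rw [Finset.sum_sub_distrib, Finset.sum_const, nsmul_eq_mul] at h3
  have hc : ((s.erase i).card : ℝ) ≤ s.card := by exact_mod_cast Finset.card_erase_le
  rw [← Finset.add_sum_erase _ _ hi, ← Finset.add_sum_erase _ _ hi] at h2
  have h4 := h1 i hi
  have : ((s.erase i).card : ℝ) * η ≤ s.card * η := by gcongr
  constructor <;> nlinarith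

end Abstract
section Concrete
open Filter Topology MvPolynomial

theorem mem_idx {n r : ℕ} {d : (Fin n → ℕ) × ℕ} : d ∈ idx n r ↔ (∑ i, d.1 i) + d.2 ≤ r := by
  simp only [idx, Finset.mem_filter, Finset.mem_product, Fintype.mem_piFinset, Finset.mem_range,
    and_iff_right_iff_imp]
  intro h
  refine ⟨fun i => ?_, by omega⟩
  have := Finset.single_le_sum (f := d.1) (fun _ _ => Nat.zero_le _) (Finset.mem_univ i)
  omega

theorem mem_xIdx {n r : ℕ} {e : Fin n → ℕ} : e ∈ xIdx n r ↔ (∑ i, e i) ≤ r := by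
  simp only [xIdx, Finset.mem_filter, Fintype.mem_piFinset, Finset.mem_range,
    and_iff_right_iff_imp]
  intro h i
  have := Finset.single_le_sum (f := e) (fun _ _ => Nat.zero_le _) (Finset.mem_univ i)
  omega

/-- exponent to index -/
def toIdx {n : ℕ} (e : Option (Fin n) →₀ ℕ) : (Fin n → ℕ) × ℕ := (fun i => e (some i), e none)

/-- index to exponent -/
def ofIdx {n : ℕ} (d : (Fin n → ℕ) × ℕ) : Option (Fin n) →₀ ℕ :=
  Finsupp.equivFunOnFinite.symm fun o => o.elim d.2 d.1

theorem toIdx_ofIdx {n : ℕ} (d : (Fin n → ℕ) × ℕ) : toIdx (ofIdx d) = d := rfl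

theorem ofIdx_toIdx {n : ℕ} (e : Option (Fin n) →₀ ℕ) : ofIdx (toIdx e) = e := by
  ext o; cases o <;> rfl

/-- monomials -/
def mon {n : ℕ} (d : (Fin n → ℕ) × ℕ) : MvPolynomial (Option (Fin n)) ℝ := monomial (ofIdx d) 1

theorem mon_mul {n : ℕ} (a b : (Fin n → ℕ) × ℕ) :
    mon a * mon b = mon (fun i => a.1 i + b.1 i, a.2 + b.2) := by
  rw [mon, mon, mon, monomial_mul, one_mul]
  have : ofIdx a + ofIdx b = ofIdx (fun i => a.1 i + b.1 i, a.2 + b.2) := by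
    ext o; cases o <;> rfl
  rw [this]

/-- the Riesz functional -/
def Lf {n : ℕ} (φ : ((Fin n → ℕ) × ℕ) → ℝ) : MvPolynomial (Option (Fin n)) ℝ →ₗ[ℝ] ℝ :=
  (basisMonomials (Option (Fin n)) ℝ).constr ℝ fun e => φ (toIdx e)

theorem Lf_monomial {n : ℕ} (φ : ((Fin n → ℕ) × ℕ) → ℝ) (e : Option (Fin n) →₀ ℕ) (c : ℝ) :
    Lf φ (monomial e c) = c * φ (toIdx e) := by
  have h : monomial e c = c • basisMonomials (Option (Fin n)) ℝ e := by
    simp [coe_basisMonomials, smul_monomial]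
  rw [h, map_smul, Lf, Module.Basis.constr_basis, smul_eq_mul]

theorem Lf_mon {n : ℕ} (φ : ((Fin n → ℕ) × ℕ) → ℝ) (d : (Fin n → ℕ) × ℕ) :
    Lf φ (mon d) = φ d := by
  rw [mon, Lf_monomial, one_mul, toIdx_ofIdx]

theorem exists_expand {n r : ℕ} (h : MvPolynomial (Option (Fin n)) ℝ) (hr : h.totalDegree ≤ r) :
    ∃ v : idx n r → ℝ, h = ∑ a, v a • mon a.1 := by
  refine ⟨fun a => coeff (ofIdx a.1) h, ?_⟩
  rw [Finset.sum_coe_sort (idx n r) (fun a => coeff (ofIdx a) h • mon a)]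
  ext e
  rw [coeff_sum]
  rw [Finset.sum_eq_single (toIdx e)]
  · simp [mon, ofIdx_toIdx]
  · intro b _ hb
    have : ofIdx b ≠ e := fun h => hb (by rw [← h, toIdx_ofIdx])
    simp [mon, coeff_monomial, this]
  · intro he
    rw [mem_idx] at he
    rw [ofIdx_toIdx, coeff_smul, coeff_eq_zero_of_totalDegree_lt, zero_smul]
    refine lt_of_le_of_lt hr ?_
    have : ∑ i ∈ e.support, e i = ∑ i, e i :=
      Finset.sum_subset (Finset.subset_univ _) (by simp)
    rw [this, Fintype.sum_option]
    simp only [toIdx] at he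
    omega

theorem psd_iff {n k : ℕ} (φ : ((Fin n → ℕ) × ℕ) → ℝ) (q : MvPolynomial (Option (Fin n)) ℝ)
    (M : Matrix (idx n k) (idx n k) ℝ) (hM : ∀ a b, M a b = Lf φ (q * (mon a.1 * mon b.1))) :
    M.PosSemidef ↔ ∀ v : idx n k → ℝ, 0 ≤ Lf φ (q * (∑ a, v a • mon a.1) ^ 2) := by
  rw [Matrix.posSemidef_iff_dotProduct_mulVec]
  have key : ∀ v : idx n k → ℝ,
      star v ⬝ᵥ (M.mulVec v) = Lf φ (q * (∑ a, v a • mon a.1) ^ 2) := by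
    intro v
    rw [pow_two, Finset.sum_mul_sum]
    simp only [dotProduct, Matrix.mulVec, hM, Finset.mul_sum, map_sum, Pi.star_apply, star_trivial]
    refine Finset.sum_congr rfl fun a _ => Finset.sum_congr rfl fun b _ => ?_
    rw [smul_mul_smul_comm, mul_smul_comm, map_smul, smul_eq_mul]; ring
  simp only [key, and_iff_right_iff_imp]
  intro _
  ext a b
  simp only [Matrix.conjTranspose_apply, star_trivial, hM, mul_comm]

theorem momMat_eq {n r : ℕ} (φ : ((Fin n → ℕ) × ℕ) → ℝ) (a b : idx n r) :
    momMat n r φ a b = Lf φ (1 * (mon a.1 * mon b.1)) := by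
  rw [one_mul, mon_mul, Lf_mon]; rfl

/-- polynomial of localizing matrix -/
def qX (n t : ℕ) (c : (Fin n → ℕ) → ℝ) : MvPolynomial (Option (Fin n)) ℝ :=
  ∑ e ∈ xIdx n (2 * t), c e • mon (e, 0)

theorem locMatX_eq {n t r : ℕ} (c : (Fin n → ℕ) → ℝ) (φ : ((Fin n → ℕ) × ℕ) → ℝ)
    (a b : idx n (r - t)) :
    locMatX n c t r φ a b = Lf φ (qX n t c * (mon a.1 * mon b.1)) := by
  rw [qX, Finset.sum_mul, map_sum, locMatX]
  refine Finset.sum_congr rfl fun e _ => ?_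
  rw [smul_mul_assoc, map_smul, smul_eq_mul, mon_mul, mon_mul, Lf_mon]
  simp [add_assoc]

/-- polynomial of localizing matrix -/
def qY (n : ℕ) (γ : ℝ) : MvPolynomial (Option (Fin n)) ℝ :=
  γ • mon (0, 1) - mon (0, 2)

theorem locMatY_eq {n r : ℕ} (γ : ℝ) (φ : ((Fin n → ℕ) × ℕ) → ℝ)
    (a b : idx n (r - 1)) :
    locMatY n γ r φ a b = Lf φ (qY n γ * (mon a.1 * mon b.1)) := by
  rw [qY, sub_mul, map_sub, locMatY, smul_mul_assoc, map_smul, smul_eq_mul, mon_mul, mon_mul,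
    mon_mul, Lf_mon, Lf_mon]
  simp [add_comm]

theorem mon_pow_y {n : ℕ} (k : ℕ) : (mon (0, k) : MvPolynomial (Option (Fin n)) ℝ) = X none ^ k := by
  rw [X_pow_eq_monomial, mon]
  have : (ofIdx (0, k) : Option (Fin n) →₀ ℕ) = Finsupp.single none k := by
    ext o; cases o <;> simp [ofIdx]
  rw [this]

theorem mon_split {n : ℕ} (d : (Fin n → ℕ) × ℕ) : mon d = mon (d.1, 0) * X none ^ d.2 := by
  rw [← mon_pow_y, mon_mul]; simp

/-- algebra of polynomials in `x` -/
def Sx (n : ℕ) : Subalgebra ℝ (MvPolynomial (Option (Fin n)) ℝ) :=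
  (rename (some : Fin n → Option (Fin n)) : MvPolynomial (Fin n) ℝ →ₐ[ℝ] _).range

theorem mon_mem_Sx {n : ℕ} (a : Fin n → ℕ) : mon (a, 0) ∈ Sx n := by
  refine ⟨monomial (Finsupp.equivFunOnFinite.symm a) 1, ?_⟩
  change rename some _ = _
  rw [rename_monomial, mon]
  have : Finsupp.mapDomain some (Finsupp.equivFunOnFinite.symm a)
      = (ofIdx (a, 0) : Option (Fin n) →₀ ℕ) := by
    ext o
    cases o with
    | none => rw [Finsupp.mapDomain_of_notMem_range _ _ (by simp)]; rfl
    | some i => rw [Finsupp.mapDomain_apply (Option.some_injective _)]; rfl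
  rw [this]

/-- evaluation point -/
def pt {n : ℕ} (f : (Fin n → ℝ) → ℝ) (x : Fin n → ℝ) : Option (Fin n) → ℝ := fun o => o.elim (f x) x

theorem eval_monomial_pt {n : ℕ} (f : (Fin n → ℝ) → ℝ) (x : Fin n → ℝ) (e : Option (Fin n) →₀ ℕ)
    (c : ℝ) : eval (pt f x) (monomial e c)
      = c * ((∏ i, x i ^ (toIdx e).1 i) * f x ^ (toIdx e).2) := by
  rw [eval_monomial, Finsupp.prod_fintype _ _ (by simp), Fintype.prod_option, mul_comm (_ ^ _)]
  rfl

theorem eval_mon_pt {n : ℕ} (f : (Fin n → ℝ) → ℝ) (x : Fin n → ℝ) (d : (Fin n → ℕ) × ℕ) :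
    eval (pt f x) (mon d) = (∏ i, x i ^ d.1 i) * f x ^ d.2 := by
  rw [mon, eval_monomial_pt, one_mul, toIdx_ofIdx]

theorem eval_rename_pt {n : ℕ} (f : (Fin n → ℝ) → ℝ) (x : Fin n → ℝ) (q : MvPolynomial (Fin n) ℝ) :
    eval (pt f x) (rename some q) = eval x q := by
  rw [eval_rename]; rfl

theorem eval_qX {n t : ℕ} (c : (Fin n → ℕ) → ℝ) (f : (Fin n → ℝ) → ℝ) (x : Fin n → ℝ) :
    eval (pt f x) (qX n t c) = polyEval n (2 * t) c x := by
  simp [qX, polyEval, eval_mon_pt, smul_eval]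

theorem measurable_evalpt {n : ℕ} {f : (Fin n → ℝ) → ℝ} (hf : Measurable f)
    (P : MvPolynomial (Option (Fin n)) ℝ) : Measurable fun x => eval (pt f x) P := by
  refine (MvPolynomial.continuous_eval P).measurable.comp (measurable_pi_iff.2 fun o => ?_)
  cases o with
  | none => exact hf
  | some i => exact measurable_pi_apply i

theorem bdd_evalpt {n : ℕ} {f : (Fin n → ℝ) → ℝ} {X : Set (Fin n → ℝ)} {γ : ℝ} (hXc : IsCompact X)
    (hfY : ∀ x ∈ X, f x ∈ Icc 0 γ) (P : MvPolynomial (Option (Fin n)) ℝ) :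
    ∃ C, ∀ x ∈ X, |eval (pt f x) P| ≤ C := by
  induction P using MvPolynomial.induction_on with
  | C a => exact ⟨|a|, by simp⟩
  | add p q hp hq =>
    obtain ⟨C, hC⟩ := hp
    obtain ⟨D, hD⟩ := hq
    refine ⟨C + D, fun x hx => ?_⟩
    rw [map_add]
    exact (abs_add_le _ _).trans (add_le_add (hC x hx) (hD x hx))
  | mul_X p o hp =>
    obtain ⟨C, hC⟩ := hp
    have : ∃ D, ∀ x ∈ X, |pt f x o| ≤ D := by
      cases o with
      | none => exact ⟨γ, fun x hx => abs_le.2 ⟨by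
          have := hfY x hx; change -γ ≤ f x; linarith [this.1, this.2], (hfY x hx).2⟩⟩
      | some i =>
        obtain ⟨D, hD⟩ := hXc.exists_bound_of_continuousOn (continuous_apply i).continuousOn
        exact ⟨D, hD⟩
    obtain ⟨D, hD⟩ := this
    refine ⟨C * D, fun x hx => ?_⟩
    rw [map_mul, eval_X, abs_mul]
    exact mul_le_mul (hC x hx) (hD x hx) (abs_nonneg _) ((abs_nonneg _).trans (hC x hx))

theorem integrable_evalpt {n : ℕ} {f : (Fin n → ℝ) → ℝ} {X : Set (Fin n → ℝ)} {γ : ℝ}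
    (hXc : IsCompact X) (hfY : ∀ x ∈ X, f x ∈ Icc 0 γ) (hf : Measurable f)
    (lam : Measure (Fin n → ℝ)) [IsProbabilityMeasure lam] (hlam : ∀ᵐ x ∂lam, x ∈ X)
    (P : MvPolynomial (Option (Fin n)) ℝ) : Integrable (fun x => eval (pt f x) P) lam := by
  obtain ⟨C, hC⟩ := bdd_evalpt hXc hfY P
  refine Integrable.of_bound (measurable_evalpt hf P).aestronglyMeasurable C ?_
  filter_upwards [hlam] with x hx using hC x hx

theorem Lf_eq_integral {n : ℕ} {f : (Fin n → ℝ) → ℝ} {X : Set (Fin n → ℝ)} {γ : ℝ}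
    (hXc : IsCompact X) (hfY : ∀ x ∈ X, f x ∈ Icc 0 γ) (hf : Measurable f)
    (lam : Measure (Fin n → ℝ)) [IsProbabilityMeasure lam] (hlam : ∀ᵐ x ∂lam, x ∈ X)
    (μmom : ((Fin n → ℕ) × ℕ) → ℝ)
    (hμmom : ∀ d : (Fin n → ℕ) × ℕ,
      μmom d = ∫ x, (∏ i, x i ^ d.1 i) * f x ^ d.2 ∂lam)
    (P : MvPolynomial (Option (Fin n)) ℝ) : Lf μmom P = ∫ x, eval (pt f x) P ∂lam := by
  induction P using MvPolynomial.induction_on' with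
  | monomial e c =>
    simp only [eval_monomial_pt]
    rw [Lf_monomial, hμmom, integral_const_mul]
  | add p q hp hq =>
    simp only [map_add]
    rw [hp, hq, integral_add] <;> exact integrable_evalpt hXc hfY hf lam hlam _

theorem Lf_eventually_eq {n : ℕ} (μmom : ((Fin n → ℕ) × ℕ) → ℝ) (φseq : ℕ → ((Fin n → ℕ) × ℕ) → ℝ)
    (h : ∀ᶠ r in atTop, ∀ d : (Fin n → ℕ) × ℕ, d.2 ≤ 1 → (∑ i, d.1 i) + d.2 ≤ 2 * r →
      φseq r d = μmom d) (j : ℕ) (hj : j ≤ 1) (q : MvPolynomial (Fin n) ℝ) :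
    ∀ᶠ r in atTop, Lf (φseq r) (X none ^ j * rename some q) = Lf μmom (X none ^ j * rename some q) := by
  induction q using MvPolynomial.induction_on' with
  | monomial e c =>
    rw [rename_monomial, X_pow_eq_monomial, monomial_mul, one_mul]
    set e' := Finsupp.single none j + Finsupp.mapDomain some e with he'
    have hn : e' none = j := by
      rw [he', Finsupp.add_apply, Finsupp.mapDomain_of_notMem_range _ _ (by simp)]; simp
    filter_upwards [h, eventually_ge_atTop ((∑ i, (toIdx e').1 i) + (toIdx e').2)] with r h1 h2
    rw [Lf_monomial, Lf_monomial, h1 _ (by simp [toIdx, hn, hj]) (by omega)]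
  | add p q hp hq =>
    filter_upwards [hp, hq] with r h1 h2
    rw [map_add, mul_add, map_add, map_add, h1, h2]

theorem approx_poly {n : ℕ} {f : (Fin n → ℝ) → ℝ} {X : Set (Fin n → ℝ)} {γ : ℝ} (hγ : 0 < γ)
    (hXc : IsCompact X) (hfY : ∀ x ∈ X, f x ∈ Icc 0 γ) (hf : Measurable f)
    (lam : Measure (Fin n → ℝ)) [IsProbabilityMeasure lam] (hlam : ∀ᵐ x ∂lam, x ∈ X)
    (ε : ℝ) (hε : 0 < ε) : ∃ q : MvPolynomial (Fin n) ℝ, (∀ x ∈ X, |eval x q| ≤ γ + 1) ∧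
      ∫ x, (f x - eval x q) ^ 2 ∂lam ≤ ε := by
  have hfi : Integrable f lam := by
    simpa [pt] using integrable_evalpt hXc hfY hf lam hlam (MvPolynomial.X none)
  set η := min 1 (ε / (2 * (2 * γ + 1))) with hη
  have hη0 : 0 < η := by positivity
  have hη1 : η ≤ 1 := min_le_left _ _
  have hη2 : (2 * γ + 1) * (η + η) ≤ ε := by
    have : η ≤ ε / (2 * (2 * γ + 1)) := min_le_right _ _
    rw [le_div_iff₀ (by positivity)] at this
    linarith
  obtain ⟨g, hg, hgi⟩ := hfi.exists_boundedContinuous_integral_sub_le hη0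
  let c : C(Fin n → ℝ, ℝ) := ⟨fun x => max 0 (min γ (g x)), by fun_prop⟩
  let A : Subalgebra ℝ C(Fin n → ℝ, ℝ) :=
    (aeval (fun i : Fin n => (⟨fun x => x i, continuous_apply i⟩ : C(Fin n → ℝ, ℝ)))).range
  have hA : A.SeparatesPoints := by
    intro x y hxy
    obtain ⟨i, hi⟩ := Function.ne_iff.1 hxy
    exact ⟨_, ⟨_, ⟨MvPolynomial.X i, rfl⟩, rfl⟩, by simpa using hi⟩
  have hev : ∀ q x, (aeval (fun i : Fin n => (⟨fun x => x i, continuous_apply i⟩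
      : C(Fin n → ℝ, ℝ))) q : C(Fin n → ℝ, ℝ)) x = eval x q := by
    intro q x
    induction q using MvPolynomial.induction_on with
    | C a => simp
    | add p q hp hq => rw [map_add, map_add, ContinuousMap.add_apply, hp, hq]
    | mul_X p i hp => rw [map_mul, map_mul, ContinuousMap.mul_apply, hp, aeval_X, eval_X]; rfl
  obtain ⟨_, ⟨q, rfl⟩, hq⟩ :=
    ContinuousMap.exists_mem_subalgebra_near_continuous_of_isCompact_of_separatesPoints hA c hXc hη0
  have hqx : ∀ x ∈ X, |eval x q - max 0 (min γ (g x))| < η := by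
    intro x hx
    have := hq x hx
    rw [← hev q x]
    exact this
  refine ⟨q, fun x hx => ?_, ?_⟩
  · have h1 := abs_lt.1 (hqx x hx)
    have h2 : max 0 (min γ (g x)) ≤ γ := max_le hγ.le (min_le_left _ _)
    have h3 : 0 ≤ max 0 (min γ (g x)) := le_max_left _ _
    rw [abs_le]; constructor <;> linarith [h1.1, h1.2]
  · have hb : ∀ᵐ x ∂lam, (f x - eval x q) ^ 2 ≤ (2 * γ + 1) * (‖f x - g x‖ + η) := by
      filter_upwards [hlam] with x hx
      have h1 := abs_lt.1 (hqx x hx)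
      have h2 : max 0 (min γ (g x)) ≤ γ := max_le hγ.le (min_le_left _ _)
      have h3 : 0 ≤ max 0 (min γ (g x)) := le_max_left _ _
      have hfx := hfY x hx
      have h4 : |f x - max 0 (min γ (g x))| ≤ |f x - g x| := by
        have e : f x = max 0 (min γ (f x)) := by rw [min_eq_right hfx.2, max_eq_right hfx.1]
        conv_lhs => rw [e]
        exact (abs_max_sub_max_le_max _ _ _ _).trans (max_le (by simp)
          ((abs_min_sub_min_le_max _ _ _ _).trans (by simp)))
      have h5 : |f x - eval x q| ≤ |f x - g x| + η := by
        have := abs_sub_le (f x) (max 0 (min γ (g x))) (eval x q)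
        rw [abs_sub_comm (max _ _)] at this
        linarith [hqx x hx]
      have h6 : |f x - eval x q| ≤ 2 * γ + 1 := by
        rw [abs_le]; constructor <;> linarith [h1.1, h1.2, hfx.1, hfx.2]
      rw [← sq_abs, sq, Real.norm_eq_abs]
      gcongr
    have hi1 : Integrable (fun x => (f x - eval x q) ^ 2) lam := by
      have := integrable_evalpt hXc hfY hf lam hlam ((MvPolynomial.X none - rename some q) ^ 2)
      simpa [eval_rename_pt, pt] using this
    have hi2 : Integrable (fun x => ‖f x - g x‖) lam := (hfi.sub hgi).norm
    refine (integral_mono_ae hi1 ((hi2.add (integrable_const η)).const_mul _) hb).trans ?_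
    change ∫ x, (2 * γ + 1) * (‖f x - g x‖ + η) ∂lam ≤ _
    rw [integral_const_mul, integral_add hi2 (integrable_const η)]
    simp only [integral_const, probReal_univ, one_smul]
    refine le_trans ?_ hη2
    gcongr

end Concrete

open Filter Topology in
/-- If `φ^r` is an optimal solution of the order-`r` relaxation with
objective `𝒯_s(φ) = Σ_{|d| ≤ s} φ_{2d}` for each admissible `r`, then the optimal values
`𝒯_s(φ^r)` converge to `𝒯_s(μ) = Σ_{|d| ≤ s} μ_{2d}` and `φ^r_d → μ_d` for every
`d ∈ ℕ^{n+1}_{2s}`. -/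
theorem sdp_convergence_finitely_many_moments
    (n m : ℕ) (hn : 1 ≤ n) (hm : 1 ≤ m)
    (γ : ℝ) (hγ : 0 < γ)
    (g : Fin m → (Fin n → ℕ) → ℝ) (t : Fin m → ℕ)
    (hgdeg : ∀ j e, 2 * t j < ∑ i, e i → g j e = 0)
    (hg1t : t ⟨0, hm⟩ = 1)
    (hg1 : ∀ x : Fin n → ℝ,
      polyEval n (2 * t ⟨0, hm⟩) (g ⟨0, hm⟩) x = (n : ℝ) - ∑ i, x i ^ 2)
    (X : Set (Fin n → ℝ))
    (hXdef : X = {x | ∀ j, 0 ≤ polyEval n (2 * t j) (g j) x})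
    (hXsub : X ⊆ Icc 0 1) (hXc : IsCompact X)
    (lam : Measure (Fin n → ℝ)) [IsProbabilityMeasure lam] (hlam : lam Xᶜ = 0)
    (f : (Fin n → ℝ) → ℝ) (hf : Measurable f) (hfY : ∀ x ∈ X, f x ∈ Icc 0 γ)
    (μmom : ((Fin n → ℕ) × ℕ) → ℝ)
    (hμmom : ∀ d : (Fin n → ℕ) × ℕ,
      μmom d = ∫ x, (∏ i, x i ^ d.1 i) * f x ^ d.2 ∂lam)
    (s : ℕ)
    (φseq : ℕ → ((Fin n → ℕ) × ℕ) → ℝ)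
    (hopt : ∀ r : ℕ, s ≤ r → 1 ≤ r → (∀ j, t j ≤ r) →
      Feasible n m γ g t μmom r (φseq r) ∧
      ∀ φ : ((Fin n → ℕ) × ℕ) → ℝ, Feasible n m γ g t μmom r φ →
        ∑ d ∈ idx n s, φseq r (fun i => 2 * d.1 i, 2 * d.2)
          ≤ ∑ d ∈ idx n s, φ (fun i => 2 * d.1 i, 2 * d.2)) :
    Tendsto (fun r => ∑ d ∈ idx n s, φseq r (fun i => 2 * d.1 i, 2 * d.2)) atTop
      (𝓝 (∑ d ∈ idx n s, μmom (fun i => 2 * d.1 i, 2 * d.2))) ∧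
    ∀ d : (Fin n → ℕ) × ℕ, (∑ i, d.1 i) + d.2 ≤ 2 * s →
      Tendsto (fun r => φseq r d) atTop (𝓝 (μmom d)) := by
  classical
  have hae : ∀ᵐ x ∂lam, x ∈ X := by
    rw [ae_iff]; exact hlam
  have hInt := Lf_eq_integral hXc hfY hf lam hae μmom hμmom
  have hIi := integrable_evalpt hXc hfY hf lam hae
  -- positivity of the true moment functional
  have hIq : ∀ q h : MvPolynomial (Option (Fin n)) ℝ,
      (∀ x ∈ X, 0 ≤ MvPolynomial.eval (pt f x) q) → 0 ≤ Lf μmom (q * h ^ 2) := by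
    intro q h hq
    rw [hInt]
    refine integral_nonneg_of_ae ?_
    filter_upwards [hae] with x hx
    rw [map_mul, map_pow]
    exact mul_nonneg (hq x hx) (sq_nonneg _)
  have hqYpos : ∀ x ∈ X, 0 ≤ MvPolynomial.eval (pt f x) (qY n γ) := by
    intro x hx
    have h := hfY x hx
    simp only [qY, map_sub, MvPolynomial.smul_eval, eval_mon_pt]
    simp
    nlinarith [h.1, h.2]
  have hqY : ∀ φ : ((Fin n → ℕ) × ℕ) → ℝ, ∀ h, Lf φ (qY n γ * h ^ 2)
      = γ * Lf φ (MvPolynomial.X none * h ^ 2) - Lf φ (MvPolynomial.X none ^ 2 * h ^ 2) := by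
    intro φ h
    rw [qY, mon_pow_y, mon_pow_y, pow_one, sub_mul, map_sub, smul_mul_assoc, map_smul, smul_eq_mul]
  -- the true moments are feasible
  have hfeas : ∀ r, Feasible n m γ g t μmom r μmom := by
    intro r
    refine ⟨?_, fun j => ?_, ?_, fun _ _ _ => rfl⟩
    · rw [psd_iff μmom 1 _ (momMat_eq μmom)]
      exact fun v => hIq _ _ (by simp)
    · rw [psd_iff μmom _ _ (locMatX_eq (g j) μmom)]
      refine fun v => hIq _ _ fun x hx => ?_
      rw [eval_qX]
      rw [hXdef] at hx
      exact hx j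
    · rw [psd_iff μmom _ _ (locMatY_eq γ μmom)]
      exact fun v => hIq _ _ hqYpos
  have hadm : ∀ᶠ r : ℕ in atTop, s ≤ r ∧ 1 ≤ r ∧ ∀ j, t j ≤ r := by
    filter_upwards [eventually_ge_atTop s, eventually_ge_atTop 1,
      eventually_ge_atTop (∑ j, t j)] with r h1 h2 h3
    exact ⟨h1, h2, fun j =>
      (Finset.single_le_sum (f := t) (fun _ _ => Nat.zero_le _) (Finset.mem_univ j)).trans h3⟩
  have hF : ∀ᶠ r in atTop, Feasible n m γ g t μmom r (φseq r) := by
    filter_upwards [hadm] with r h using (hopt r h.1 h.2.1 h.2.2).1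
  have hup : ∀ᶠ r in atTop, ∑ d ∈ idx n s, φseq r (fun i => 2 * d.1 i, 2 * d.2)
      ≤ ∑ d ∈ idx n s, μmom (fun i => 2 * d.1 i, 2 * d.2) := by
    filter_upwards [hadm] with r h using (hopt r h.1 h.2.1 h.2.2).2 _ (hfeas r)
  have hpos : ∀ h, ∀ᶠ r in atTop, 0 ≤ Lf (φseq r) (h ^ 2) := by
    intro h
    filter_upwards [hF, eventually_ge_atTop h.totalDegree] with r h1 h2
    obtain ⟨v, hv⟩ := exists_expand h h2
    have := (psd_iff _ 1 _ (momMat_eq (φseq r))).1 h1.1 v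
    rwa [one_mul, ← hv] at this
  have hYp : ∀ h, ∀ᶠ r in atTop, 0 ≤ γ * Lf (φseq r) (MvPolynomial.X none * h ^ 2)
      - Lf (φseq r) (MvPolynomial.X none ^ 2 * h ^ 2) := by
    intro h
    filter_upwards [hF, eventually_ge_atTop (h.totalDegree + 1)] with r h1 h2
    obtain ⟨v, hv⟩ := exists_expand (r := r - 1) h (by omega)
    have := (psd_iff _ _ _ (locMatY_eq γ (φseq r))).1 h1.2.2.1 v
    rwa [← hv, hqY] at this
  have hIpos : ∀ h, 0 ≤ Lf μmom (h ^ 2) := by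
    intro h
    have := hIq 1 h (by simp)
    rwa [one_mul] at this
  have hIY : ∀ h, 0 ≤ γ * Lf μmom (MvPolynomial.X none * h ^ 2)
      - Lf μmom (MvPolynomial.X none ^ 2 * h ^ 2) := by
    intro h
    have := hIq _ h hqYpos
    rwa [hqY] at this
  have hD : ∀ᶠ r in atTop, ∀ d : (Fin n → ℕ) × ℕ, d.2 ≤ 1 → (∑ i, d.1 i) + d.2 ≤ 2 * r →
      φseq r d = μmom d := by
    filter_upwards [hF] with r h using h.2.2.2
  have h0 : ∀ w ∈ Sx n, ∀ᶠ r in atTop, Lf (φseq r) w = Lf μmom w := by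
    rintro _ ⟨q, rfl⟩
    have := Lf_eventually_eq μmom φseq hD 0 (by norm_num) q
    simp only [pow_zero, one_mul] at this
    exact this
  have h1 : ∀ w ∈ Sx n, ∀ᶠ r in atTop,
      Lf (φseq r) (MvPolynomial.X none * w) = Lf μmom (MvPolynomial.X none * w) := by
    rintro _ ⟨q, rfl⟩
    have := Lf_eventually_eq μmom φseq hD 1 le_rfl q
    simp only [pow_one] at this
    exact this
  have hevy : ∀ x, MvPolynomial.eval (pt f x) (MvPolynomial.X none) = f x := by
    intro x; rw [MvPolynomial.eval_X]; rfl
  have happ : ∀ ε > 0, ∃ p ∈ Sx n, Lf μmom ((MvPolynomial.X none - p) ^ 2) ≤ ε := by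
    intro ε hε
    obtain ⟨q, -, hq⟩ := approx_poly hγ hXc hfY hf lam hae ε hε
    refine ⟨MvPolynomial.rename some q, ⟨q, rfl⟩, ?_⟩
    rw [hInt]
    simpa only [map_pow, map_sub, hevy, eval_rename_pt] using hq
  have happT : ∀ w : MvPolynomial (Option (Fin n)) ℝ, ∀ k, ∀ ε > 0, ∃ p ∈ Sx n,
      Lf μmom (w ^ 2 * sosT (MvPolynomial.X none) p k) ≤ ε := by
    intro w k ε hε
    obtain ⟨W, hW⟩ := bdd_evalpt hXc hfY w
    obtain ⟨C, hC, hT⟩ := sosT_le (γ + 1) k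
    obtain ⟨q, hqb, hq⟩ := approx_poly hγ hXc hfY hf lam hae (ε / (W ^ 2 * C + 1)) (by positivity)
    refine ⟨MvPolynomial.rename some q, ⟨q, rfl⟩, ?_⟩
    rw [hInt]
    have hi := (hIi ((MvPolynomial.X none - MvPolynomial.rename some q) ^ 2)).const_mul (W ^ 2 * C)
    refine (integral_mono_ae (hIi _) hi ?_).trans ?_
    · filter_upwards [hae] with x hx
      have hfx := hfY x hx
      have e := sosT_map (MvPolynomial.eval (pt f x)) (MvPolynomial.X none)
        (MvPolynomial.rename some q) k
      simp only [map_mul, map_pow, map_sub, e, hevy, eval_rename_pt]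
      have b1 : MvPolynomial.eval (pt f x) w ^ 2 ≤ W ^ 2 := by
        rw [← sq_abs]; gcongr; exact hW x hx
      have b2 := hT (f x) (MvPolynomial.eval x q)
        (abs_le.2 ⟨by linarith [hfx.1], by linarith [hfx.2]⟩) (hqb x hx)
      calc _ ≤ MvPolynomial.eval (pt f x) w ^ 2 * (C * (f x - MvPolynomial.eval x q) ^ 2) := by
            gcongr
        _ ≤ W ^ 2 * (C * (f x - MvPolynomial.eval x q) ^ 2) := by gcongr
        _ = _ := by ring
    · rw [integral_const_mul]
      simp only [map_pow, map_sub, hevy, eval_rename_pt]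
      have hK : 0 ≤ W ^ 2 * C := by positivity
      rw [le_div_iff₀ (by positivity)] at hq
      have : 0 ≤ ∫ x, (f x - MvPolynomial.eval x q) ^ 2 ∂lam := integral_nonneg fun x => sq_nonneg _
      linarith
  -- per-term convergence of the objective
  have hmon2 : ∀ d : (Fin n → ℕ) × ℕ, mon (fun i => 2 * d.1 i, 2 * d.2)
      = mon (d.1, 0) ^ 2 * MvPolynomial.X none ^ (2 * d.2) := by
    intro d
    rw [mon_split, pow_two, mon_mul]
    simp [two_mul]
  have hterm : ∀ d ∈ idx n s, Tendsto (fun r => φseq r (fun i => 2 * d.1 i, 2 * d.2)) atTop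
      (𝓝 (μmom (fun i => 2 * d.1 i, 2 * d.2))) := by
    refine sum_squeeze (idx n s) (fun r d => φseq r (fun i => 2 * d.1 i, 2 * d.2))
      (fun d => μmom (fun i => 2 * d.1 i, 2 * d.2)) (fun d _ ε hε => ?_) hup
    have := ab_lower (MvPolynomial.X none) (Sx n) (fun r => Lf (φseq r)) (Lf μmom) hpos h0 h1 d.2
      (mon (d.1, 0)) (mon_mem_Sx d.1) (happT _) ε hε
    simpa only [← hmon2, Lf_mon] using this
  have hmain : ∀ d : (Fin n → ℕ) × ℕ, (∑ i, d.1 i) + d.2 ≤ 2 * s →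
      Tendsto (fun r => φseq r d) atTop (𝓝 (μmom d)) := by
    intro d hd
    rcases Nat.eq_zero_or_pos s with hs | hs
    · refine tendsto_const_nhds.congr' ?_
      filter_upwards [hD] with r h
      exact (h d (by omega) (by omega)).symm
    · have hy := hterm (0, 1) (by rw [mem_idx]; simp; omega)
      have hy2 : Tendsto (fun r => Lf (φseq r) (MvPolynomial.X none ^ 2)) atTop
          (𝓝 (Lf μmom (MvPolynomial.X none ^ 2))) := by
        simp only [← mon_pow_y, Lf_mon]
        exact hy
      have := ab_step (MvPolynomial.X none) γ (Sx n) (fun r => Lf (φseq r)) (Lf μmom) hpos hYp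
        hIpos hIY h0 h1 happ hy2 d.2 (mon (d.1, 0)) (mon_mem_Sx d.1)
      simpa only [← mon_split, Lf_mon] using this
  exact ⟨tendsto_finsetSum _ hterm, hmain⟩
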